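/- For every real V with 0<V<10⁻⁶, one has f(V)>0, where f(V)=−(3/2)·V·ω̃₊(1/V)³−1. -/

import Mathlib

/-- z₀(G) = 32G³+27G²+3√3·√(27G⁴+64G⁵). -/
noncomputable def z₀ (G : ℝ) : ℝ :=
  32 * G ^ 3 + 27 * G ^ 2 + 3 * Real.sqrt 3 * Real.sqrt (27 * G ^ 4 + 64 * G ^ 5)

/-- z₁(G) = 2^{5/3}·G·z₀(G)^{−1/3}. -/
noncomputable def z₁ (G : ℝ) : ℝ :=
  (2 : ℝ) ^ ((5 : ℝ) / 3) * G * (z₀ G) ^ (-(1 : ℝ) / 3)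

/-- y₀(G) = (2G/3)·(1+z₁(G)+z₁(G)⁻¹), a root of the resolvent cubic. -/
noncomputable def y₀ (G : ℝ) : ℝ :=
  (2 * G / 3) * (1 + z₁ G + (z₁ G)⁻¹)

/-- The quartic P_G(k)=k⁴−2Gk²+2Gk+G² determining the critical frequencies. -/
noncomputable def P (G k : ℝ) : ℝ :=
  k ^ 4 - 2 * G * k ^ 2 + 2 * G * k + G ^ 2

/-- The discriminant D(G)=−2y₀(G)+4G+4G/√(2y₀(G)). -/
noncomputable def Dd (G : ℝ) : ℝ :=
  -2 * y₀ G + 4 * G + 4 * G / Real.sqrt (2 * y₀ G)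

/-- The critical frequency closer to the origin, ω̃₊(G)=(−√(2y₀(G))+√(D(G)))/2. -/
noncomputable def ωp (G : ℝ) : ℝ :=
  (-Real.sqrt (2 * y₀ G) + Real.sqrt (Dd G)) / 2

/-- The critical frequency farther from the origin, ω̃₋(G)=(−√(2y₀(G))−√(D(G)))/2. -/
noncomputable def ωm (G : ℝ) : ℝ :=
  (-Real.sqrt (2 * y₀ G) - Real.sqrt (Dd G)) / 2

/-- The focusing-condition function f(V)=−(3/2)·V·ω̃₊(1/V)³−1. -/
noncomputable def fV (V : ℝ) : ℝ :=
  -(3 / 2) * V * (ωp (1 / V)) ^ 3 - 1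

/-!
By AM-GM, `z₁ + z₁⁻¹ ≥ 2`, so `y₀ G ≥ 2 * G`. Thus the terms `-2 * y₀ G + 4 * G` of the
discriminant are nonpositive, which leaves `Dd G ≤ 2 * √G`, and the critical frequency satisfies
`|ωp G| ≥ √G - √(2 * √G) / 2`. Hence `f(V) + 1` grows at least like `V ^ (-1 / 2)` as `V → 0`.
-/

lemma z₁_pos {G : ℝ} (hG : 0 < G) : 0 < z₁ G := by
  have hz₀ : 0 < z₀ G := by unfold z₀; positivity
  unfold z₁
  positivity

lemma two_mul_le_y₀ {G : ℝ} (hG : 0 < G) : 2 * G ≤ y₀ G := by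
  have hamgm : 2 ≤ z₁ G + (z₁ G)⁻¹ := by
    have hz₁ := z₁_pos hG
    simpa using two_mul_le_add_of_sq_le_mul (r := 1) hz₁.le (inv_pos.2 hz₁).le
      (by rw [mul_inv_cancel₀ hz₁.ne', one_pow])
  calc 2 * G = 2 * G / 3 * (1 + 2) := by ring
    _ ≤ 2 * G / 3 * (1 + (z₁ G + (z₁ G)⁻¹)) := by gcongr
    _ = y₀ G := by rw [y₀, add_assoc]

lemma two_mul_sqrt_le_sqrt_two_mul_y₀ {G : ℝ} (hG : 0 < G) : 2 * √G ≤ √(2 * y₀ G) := by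
  apply Real.le_sqrt_of_sq_le
  calc (2 * √G) ^ 2 = 2 * (2 * G) := by rw [mul_pow, Real.sq_sqrt hG.le]; ring
    _ ≤ 2 * y₀ G := by gcongr; exact two_mul_le_y₀ hG

lemma Dd_le_two_mul_sqrt {G : ℝ} (hG : 0 < G) : Dd G ≤ 2 * √G := by
  have hquot : 4 * G / √(2 * y₀ G) ≤ 2 * √G :=
    calc 4 * G / √(2 * y₀ G) ≤ 4 * G / (2 * √G) := by
          gcongr
          exact two_mul_sqrt_le_sqrt_two_mul_y₀ hG
      _ = 2 * (G / √G) := by ring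
      _ = 2 * √G := by rw [Real.div_sqrt]
  have hy := two_mul_le_y₀ hG
  unfold Dd
  linarith

lemma ωp_le {G : ℝ} (hG : 0 < G) : ωp G ≤ √(2 * √G) / 2 - √G := by
  have hs := two_mul_sqrt_le_sqrt_two_mul_y₀ hG
  have hD := Real.sqrt_le_sqrt (Dd_le_two_mul_sqrt hG)
  unfold ωp
  linarith

/- The substitution `G = u ^ 4 / 4` makes both radicals in `ωp_le` polynomial in `u`. -/
lemma le_fV_four_div_pow_four {u : ℝ} (hu : 0 < u) :
    3 * (u - 1) ^ 3 / (4 * u) - 1 ≤ fV (4 / u ^ 4) := by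
  have hsqrt : √(u ^ 4 / 4) = u ^ 2 / 2 := by
    rw [show u ^ 4 / 4 = (u ^ 2 / 2) ^ 2 by ring, Real.sqrt_sq (by positivity)]
  have hfreq : u * (u - 1) / 2 ≤ -ωp (u ^ 4 / 4) := by
    have h := ωp_le (G := u ^ 4 / 4) (by positivity)
    rw [hsqrt, mul_div_cancel₀ _ two_ne_zero, Real.sqrt_sq hu.le] at h
    linarith
  have hcube : (u * (u - 1) / 2) ^ 3 ≤ (-ωp (u ^ 4 / 4)) ^ 3 :=
    (Odd.strictMono_pow (by decide)).monotone hfreq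
  calc 3 * (u - 1) ^ 3 / (4 * u) - 1
      = 3 / 2 * (4 / u ^ 4) * (u * (u - 1) / 2) ^ 3 - 1 := by field_simp; ring
    _ ≤ 3 / 2 * (4 / u ^ 4) * (-ωp (u ^ 4 / 4)) ^ 3 - 1 := by gcongr
    _ = fV (4 / u ^ 4) := by rw [fV, one_div_div]; ring

lemma four_mul_lt_three_mul_sub_one_pow_three {u : ℝ} (hu : 5 / 2 ≤ u) :
    4 * u < 3 * (u - 1) ^ 3 := by
  have hu_sub : 3 / 2 ≤ u - 1 := by linarith
  calc 4 * u < 3 * ((3 / 2) ^ 2 * (u - 1)) := by linarith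
    _ ≤ 3 * ((u - 1) ^ 2 * (u - 1)) := by gcongr
    _ = 3 * (u - 1) ^ 3 := by ring

theorem focusing_holds_small_V_general (V : ℝ) (hV0 : 0 < V) (hV : V ≤ 1 / 10) : 0 < fV V := by
  obtain ⟨u, hu, rfl⟩ : ∃ u : ℝ, 0 < u ∧ 4 / u ^ 4 = V := by
    refine ⟨(4 / V) ^ (1 / 4 : ℝ), by positivity, ?_⟩
    rw [← Real.rpow_mul_natCast (by positivity)]
    norm_num
  have hu_large : 5 / 2 ≤ u := by
    rw [div_le_div_iff₀ (by positivity) (by norm_num)] at hV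
    exact le_of_pow_le_pow_left₀ four_ne_zero hu.le (by linarith)
  have hratio : 1 < 3 * (u - 1) ^ 3 / (4 * u) :=
    (one_lt_div (by positivity)).2 (four_mul_lt_three_mul_sub_one_pow_three hu_large)
  linarith [le_fV_four_div_pow_four hu]

/-- For 0<V<10⁻⁶ the focusing-condition function is positive: f(V)>0. -/
theorem focusing_holds_small_V (V : ℝ) (hV0 : 0 < V) (hV : V < 1 / 10 ^ 6) :
    0 < fV V := by
  exact focusing_holds_small_V_general V hV0 (hV.le.trans (by norm_num))
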